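/- arXiv:2210.03935 — 2 statements merged into one kernel-verified Lean document; each statement's English description precedes it below -/
import Mathlib

section
/- Let Φ : [0,∞) → [0,∞) be continuously differentiable with Φ(0) = 0 and Φ'(0) = 1, such that Φ is convex and its derivative Φ' is nonnegative and concave on [0,∞). Then for all x, y ≥ 0 one has x Φ'(y) ≤ Φ(x) + Φ(y). -/
open Set

/-!
By convexity, `Φ x` lies above the tangent at `y`: `Φ x ≥ Φ y + Φ' y * (x - y)`, so the claim reduces
to `y * Φ' y ≤ 2 * Φ y`. That holds because the concave function `Φ'`, nonnegative at `0`, lies above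
the chord `t ↦ t * Φ' y / y` on `[0, y]`; integrating over `[0, y]` gives `Φ y ≥ y * Φ' y / 2`.
The integration is done by monotonicity of `t ↦ Φ t - t ^ 2 * Φ' y / (2 * y)`.
-/

/-- If `Φ : [0,∞) → [0,∞)` is continuously differentiable with `Φ(0) = 0`,
`Φ'(0) = 1`, `Φ` convex and `Φ'` nonnegative and concave on `[0,∞)`, then
`x Φ'(y) ≤ Φ(x) + Φ(y)` for all `x, y ≥ 0`. -/
theorem stmt5 (Φ Φ' : ℝ → ℝ)
    (hΦnonneg : ∀ x ∈ Ici (0 : ℝ), 0 ≤ Φ x)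
    (hderiv : ∀ x ∈ Ici (0 : ℝ), HasDerivWithinAt Φ (Φ' x) (Ici 0) x)
    (hcont : ContinuousOn Φ' (Ici 0))
    (hΦ0 : Φ 0 = 0) (hΦ'0 : Φ' 0 = 1)
    (hΦ'nonneg : ∀ x ∈ Ici (0 : ℝ), 0 ≤ Φ' x)
    (hconv : ConvexOn ℝ (Ici 0) Φ)
    (hconc : ConcaveOn ℝ (Ici 0) Φ') :
    ∀ x y : ℝ, 0 ≤ x → 0 ≤ y → x * Φ' y ≤ Φ x + Φ y := by
  intro x y hx hy
  rcases hy.eq_or_lt with rfl | hy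
  -- For `y = 0` the claim is the tangent inequality at the endpoint, where only the
  -- one-sided derivative is available.
  · rcases hx.eq_or_lt with rfl | hx
    · simp [hΦ0]
    have h := hconv.le_slope_of_hasDerivWithinAt (x := 0) (y := x) (f' := Φ' 0)
      self_mem_Ici hx.le hx (hderiv 0 self_mem_Ici)
    rw [slope_def_field, le_div_iff₀ (by linarith)] at h
    linarith
  have hD : ∀ t, 0 < t → HasDerivAt Φ (Φ' t) t := fun t ht =>
    (hderiv t ht.le).hasDerivAt (Ici_mem_nhds ht)
  have htangent : Φ y + Φ' y * (x - y) ≤ Φ x := by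
    rcases lt_trichotomy x y with h | rfl | h
    · have := hconv.slope_le_of_hasDerivAt (mem_Ici.2 hx) (mem_Ici.2 hy.le) h (hD y hy)
      rw [slope_def_field, div_le_iff₀ (by linarith)] at this
      linarith
    · simp
    · have := hconv.le_slope_of_hasDerivAt (mem_Ici.2 hy.le) (mem_Ici.2 hx) h (hD y hy)
      rw [slope_def_field, le_div_iff₀ (by linarith)] at this
      linarith
  have hchord : ∀ t ∈ Ioo 0 y, t / y * Φ' y ≤ Φ' t := by
    rintro t ⟨h0, h1⟩
    have hle : t / y ≤ 1 := (div_le_one hy).2 h1.le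
    have := hconc.2 (mem_Ici.2 le_rfl) (mem_Ici.2 hy.le) (sub_nonneg.2 hle)
      (div_nonneg h0.le hy.le) (by ring)
    simp only [smul_eq_mul, mul_zero, zero_add, hΦ'0, mul_one, div_mul_cancel₀ t hy.ne'] at this
    linarith
  have hmono : MonotoneOn (fun t => Φ t - t ^ 2 * (Φ' y / (2 * y))) (Icc 0 y) := by
    refine monotoneOn_of_hasDerivWithinAt_nonneg (f' := fun t => Φ' t - t / y * Φ' y)
      (convex_Icc 0 y) ?_ ?_ ?_
    · refine ContinuousOn.sub (fun t ht => ?_) (by fun_prop)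
      exact ((hderiv t ht.1).continuousWithinAt).mono Icc_subset_Ici_self
    · intro t ht
      rw [interior_Icc] at ht
      have := ((hD t ht.1).sub ((hasDerivAt_pow 2 t).mul_const (Φ' y / (2 * y)))).hasDerivWithinAt
        (s := interior (Icc 0 y))
      refine this.congr_deriv ?_
      field_simp
      simp
      ring
    · intro t ht
      rw [interior_Icc] at ht
      exact sub_nonneg.2 (hchord t ht)
  have hhalf := hmono (left_mem_Icc.2 hy.le) (right_mem_Icc.2 hy.le) hy.le
  have he : y ^ 2 * (Φ' y / (2 * y)) = y * Φ' y / 2 := by field_simp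
  simp only [hΦ0, he] at hhalf
  norm_num at hhalf
  linarith
end

section
/- Let Π be an open subset of ℝ^m, let l > 0, and let (z¹_n) ⊂ L¹(Π) and (z²_n) ⊂ L^∞(Π) be sequences such that z¹_n converges weakly in L¹(Π) to some z¹ ∈ L¹(Π), |z²_n| ≤ l almost everywhere for all n, and z²_n → z² almost everywhere in Π. Then ‖z¹_n (z²_n − z²)‖_{L¹(Π)} → 0 as n → ∞. -/
/-!
The theorem reduces to a statement about pairings: if `f n ⇀ 0` weakly in `L¹(μ)`, `|g n| ≤ 1`
and `g n → 0` a.e., then `∫ f n * g n → 0` (`tendsto_integral_mul_zero`). It is applied to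
`f n = z1 n - z1lim` and `g n = sign (f n) * |z2 n - z2lim| / (2 * l)`, for which
`f n * g n = |f n * (z2 n - z2lim)| / (2 * l)`; the remaining term
`∫ |z1lim * (z2 n - z2lim)|` tends to zero by dominated convergence.

The statement about pairings is a Baire category argument, which takes the place of the uniform
integrability of weakly convergent sequences. Let `ν` be a finite measure with the same null sets
as `μ`, and let `X` be the set of `φ` with `|φ| ≤ 1` a.e., a closed subset of `L¹(ν)` and hence a
Baire space. Each functional `φ ↦ ∫ f n * φ ∂μ` is continuous on `X`
(`continuous_integral_mul`), so for `ε > 0` the sets `{φ | ∀ n ≥ N, |∫ f n * φ ∂μ| ≤ ε}` are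
closed; they cover `X` by weak convergence, so one of them is a neighbourhood of some `φ₀`. The
functions `(1 - |g n|) * φ₀ + g n` and `(1 - |g n|) * φ₀` lie in `X` and converge to `φ₀` in
`L¹(ν)`, and their difference is `g n`; therefore `|∫ f n * g n ∂μ| ≤ 2 * ε` eventually.
-/

open Set MeasureTheory Filter

namespace WeakPairing

variable {α : Type*} [MeasurableSpace α]

/-- The functions with `|φ| ≤ 1` a.e., as an order interval of `L¹(ν)`; it carries the topology
of `L¹(ν)`, not that of `L^∞`. -/
def unitInterval (ν : Measure α) [IsFiniteMeasure ν] : Set (Lp ℝ 1 ν) :=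
  Icc (Lp.const 1 ν (-1)) (Lp.const 1 ν 1)

lemma mem_unitInterval {ν : Measure α} [IsFiniteMeasure ν] (φ : Lp ℝ 1 ν) :
    φ ∈ unitInterval ν ↔ ∀ᵐ x ∂ν, |φ x| ≤ 1 := by
  have h1 := Lp.coeFn_const (1 : ENNReal) ν (1 : ℝ)
  have h2 := Lp.coeFn_const (1 : ENNReal) ν (-1 : ℝ)
  unfold unitInterval
  rw [mem_Icc, ← Lp.coeFn_le, ← Lp.coeFn_le]
  constructor
  · rintro ⟨ha, hb⟩
    filter_upwards [h1, h2, ha, hb] with x h1 h2 ha hb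
    rw [h2] at ha
    rw [h1] at hb
    exact abs_le.2 ⟨ha, hb⟩
  · intro h
    constructor
    · filter_upwards [h2, h] with x h2 h
      rw [h2]
      exact (abs_le.1 h).1
    · filter_upwards [h1, h] with x h1 h
      rw [h1]
      exact (abs_le.1 h).2

instance (ν : Measure α) [IsFiniteMeasure ν] : CompleteSpace (unitInterval ν) :=
  (isClosed_Icc : IsClosed (unitInterval ν)).completeSpace_coe

instance (ν : Measure α) [IsFiniteMeasure ν] : Nonempty (unitInterval ν) :=
  ⟨⟨0, (mem_unitInterval _).2 (by
    filter_upwards [Lp.coeFn_zero ℝ 1 ν] with x hx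
    rw [hx]
    simp)⟩⟩

/-- A convergent sequence in `L¹(ν)` has subsequences converging a.e., along which dominated
convergence applies with the bound `|f|`. -/
lemma continuous_integral_mul {μ ν : Measure α} [IsFiniteMeasure ν] (hμν : μ ≪ ν)
    {f : α → ℝ} (hf : Integrable f μ) :
    Continuous (fun φ : unitInterval ν => ∫ x, f x * (φ : Lp ℝ 1 ν) x ∂μ) := by
  rw [continuous_iff_seqContinuous]
  intro u φ hu
  apply tendsto_of_subseq_tendsto
  intro ns hns
  have h1 : Tendsto (fun k => (u (ns k) : Lp ℝ 1 ν)) atTop (nhds (φ : Lp ℝ 1 ν)) :=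
    (continuous_subtype_val.tendsto φ).comp (hu.comp hns)
  obtain ⟨ms, -, hae⟩ := (tendstoInMeasure_of_tendsto_Lp h1).exists_seq_tendsto_ae
  refine ⟨ms, tendsto_integral_of_dominated_convergence (fun x => |f x|) ?_ hf.abs ?_ ?_⟩
  · intro n
    exact hf.aestronglyMeasurable.mul ((Lp.aestronglyMeasurable _).mono_ac hμν)
  · intro n
    filter_upwards [hμν.ae_le ((mem_unitInterval _).1 (u (ns (ms n))).2)] with x hx
    rw [Real.norm_eq_abs, abs_mul]
    exact mul_le_of_le_one_right (abs_nonneg _) hx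
  · filter_upwards [hμν.ae_le hae] with x hx
    exact hx.const_mul _

/-- For `w` bounded by one and converging to `φ₀` a.e., the classes of `w n` converge to `φ₀`
in `unitInterval ν`. -/
lemma eventually_mem_of_tendsto_ae {ν : Measure α} [IsFiniteMeasure ν] {U : Set (unitInterval ν)}
    {φ₀ : unitInterval ν} (hU : U ∈ nhds φ₀) {w : ℕ → α → ℝ}
    (hw : ∀ n, AEStronglyMeasurable (w n) ν) (hb : ∀ n, ∀ᵐ x ∂ν, |w n x| ≤ 1)
    (hc : ∀ᵐ x ∂ν, Tendsto (fun n => w n x) atTop (nhds ((φ₀ : Lp ℝ 1 ν) x))) :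
    ∀ᶠ n in atTop, ∃ φ ∈ U, (φ : Lp ℝ 1 ν) =ᵐ[ν] w n := by
  have hi : ∀ n, Integrable (w n) ν := fun n =>
    Integrable.of_bound (hw n) 1 (hb n)
  have hmem : ∀ n, (hi n).toL1 ∈ unitInterval ν := fun n => by
    rw [mem_unitInterval]
    filter_upwards [(hi n).coeFn_toL1, hb n] with x hx hx'
    rwa [hx]
  have hlim : Tendsto (fun n => (⟨(hi n).toL1, hmem n⟩ : unitInterval ν)) atTop (nhds φ₀) := by
    rw [tendsto_subtype_rng, tendsto_iff_norm_sub_tendsto_zero]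
    simp only [L1.norm_eq_integral_norm]
    have h0 : ∀ n, ∀ᵐ x ∂ν, ((hi n).toL1 - (φ₀ : Lp ℝ 1 ν) : Lp ℝ 1 ν) x
        = w n x - (φ₀ : Lp ℝ 1 ν) x := fun n => by
      filter_upwards [Lp.coeFn_sub (hi n).toL1 (φ₀ : Lp ℝ 1 ν), (hi n).coeFn_toL1] with x h1 h2
      rw [h1, Pi.sub_apply, h2]
    have := tendsto_integral_of_dominated_convergence (μ := ν)
      (F := fun n x => ‖((hi n).toL1 - (φ₀ : Lp ℝ 1 ν) : Lp ℝ 1 ν) x‖) (f := fun _ => 0)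
      (fun _ => (2 : ℝ)) (fun n => (Lp.aestronglyMeasurable _).norm) (integrable_const _) ?_ ?_
    · simpa using this
    · intro n
      filter_upwards [h0 n, hb n, (mem_unitInterval _).1 φ₀.2] with x h1 h2 h3
      rw [h1, norm_norm, Real.norm_eq_abs]
      linarith [abs_sub (w n x) ((φ₀ : Lp ℝ 1 ν) x)]
    · filter_upwards [ae_all_iff.2 h0, hc] with x h1 h2
      simp only [h1]
      simpa using (h2.sub_const ((φ₀ : Lp ℝ 1 ν) x)).norm
  filter_upwards [hlim.eventually_mem hU] with n hn
  exact ⟨_, hn, (hi n).coeFn_toL1⟩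

lemma tendsto_integral_mul_zero {μ : Measure α} [SFinite μ] {f g : ℕ → α → ℝ}
    (hf : ∀ n, Integrable (f n) μ)
    (hweak : ∀ φ : α → ℝ, Measurable φ → (∀ x, |φ x| ≤ 1) →
      Tendsto (fun n => ∫ x, f n x * φ x ∂μ) atTop (nhds 0))
    (hg : ∀ n, AEStronglyMeasurable (g n) μ) (hb : ∀ n, ∀ᵐ x ∂μ, |g n x| ≤ 1)
    (hc : ∀ᵐ x ∂μ, Tendsto (fun n => g n x) atTop (nhds 0)) :
    Tendsto (fun n => ∫ x, f n x * g n x ∂μ) atTop (nhds 0) := by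
  let ν : Measure α := μ.toFinite
  have hμν : μ ≪ ν := absolutelyContinuous_toFinite μ
  have hνμ : ν ≪ μ := toFinite_absolutelyContinuous μ
  rw [Metric.tendsto_atTop']
  suffices H : ∀ ε > 0, ∀ᶠ n in atTop, |∫ x, f n x * g n x ∂μ| ≤ 2 * ε by
    intro ε hε
    obtain ⟨N, hN⟩ := eventually_atTop.1 (H (ε / 4) (by positivity))
    refine ⟨N, fun n hn => ?_⟩
    rw [Real.dist_eq, sub_zero]
    linarith [hN n hn.le]
  intro ε hε
  let A : ℕ → Set (unitInterval ν) := fun N =>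
    {φ | ∀ n, N ≤ n → |∫ x, f n x * (φ : Lp ℝ 1 ν) x ∂μ| ≤ ε}
  have hAclosed : ∀ N, IsClosed (A N) := fun N => by
    simp only [A, ofPred_forall]
    refine isClosed_iInter fun n => isClosed_iInter fun _ => ?_
    exact isClosed_le (continuous_integral_mul hμν (hf n)).abs continuous_const
  have hAcover : ⋃ N, A N = univ := by
    refine eq_univ_of_forall fun φ => mem_iUnion.2 ?_
    -- the weak convergence is tested on an everywhere bounded representative of `φ`
    let ψ : α → ℝ := fun x => max (-1) (min ((φ : Lp ℝ 1 ν) x) 1)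
    have hψm : Measurable ψ :=
      measurable_const.max ((Lp.stronglyMeasurable _).measurable.min measurable_const)
    have hψb : ∀ x, |ψ x| ≤ 1 := fun x =>
      abs_le.2 ⟨le_max_left _ _, max_le (by norm_num) (min_le_right _ _)⟩
    have hψ : ∀ᵐ x ∂μ, (φ : Lp ℝ 1 ν) x = ψ x := by
      filter_upwards [hμν.ae_le ((mem_unitInterval _).1 φ.2)] with x hx
      obtain ⟨h1, h2⟩ := abs_le.1 hx
      simp only [ψ, min_eq_left h2, max_eq_right h1]
    obtain ⟨N, hN⟩ := Metric.tendsto_atTop.1 (hweak ψ hψm hψb) ε hε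
    refine ⟨N, fun n hn => ?_⟩
    have h1 : ∫ x, f n x * (φ : Lp ℝ 1 ν) x ∂μ = ∫ x, f n x * ψ x ∂μ := by
      refine integral_congr_ae ?_
      filter_upwards [hψ] with x hx
      rw [hx]
    have h2 := hN n hn
    rw [Real.dist_eq, sub_zero] at h2
    rw [h1]
    exact h2.le
  obtain ⟨N, φ₀, hφ₀⟩ := nonempty_interior_of_iUnion_of_closed hAclosed hAcover
  have hU : A N ∈ nhds φ₀ := mem_interior_iff_mem_nhds.1 hφ₀
  have hgν : ∀ n, AEStronglyMeasurable (g n) ν := fun n => (hg n).mono_ac hνμ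
  have hφm : AEStronglyMeasurable (φ₀ : Lp ℝ 1 ν) ν := Lp.aestronglyMeasurable _
  have hφb := (mem_unitInterval _).1 φ₀.2
  have hwm : ∀ n, AEStronglyMeasurable (fun x => (1 - |g n x|) * (φ₀ : Lp ℝ 1 ν) x) ν :=
    fun n => (aestronglyMeasurable_const.sub (hgν n).norm).mul hφm
  have key : ∀ n x, |g n x| ≤ 1 → |(φ₀ : Lp ℝ 1 ν) x| ≤ 1 →
      |(1 - |g n x|) * (φ₀ : Lp ℝ 1 ν) x| ≤ 1 - |g n x| := fun n x h1 h2 => by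
    rw [abs_mul, abs_of_nonneg (sub_nonneg.2 h1)]
    exact mul_le_of_le_one_right (sub_nonneg.2 h1) h2
  have hwc : ∀ᵐ x ∂ν, Tendsto (fun n => (1 - |g n x|) * (φ₀ : Lp ℝ 1 ν) x) atTop
      (nhds ((φ₀ : Lp ℝ 1 ν) x)) := by
    filter_upwards [hνμ.ae_le hc] with x hx
    simpa using (hx.abs.const_sub 1).mul_const ((φ₀ : Lp ℝ 1 ν) x)
  have E1 := eventually_mem_of_tendsto_ae hU
    (w := fun n x => (1 - |g n x|) * (φ₀ : Lp ℝ 1 ν) x + g n x)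
    (fun n => (hwm n).add (hgν n))
    (fun n => by
      filter_upwards [hνμ.ae_le (hb n), hφb] with x h1 h2
      linarith [abs_add_le ((1 - |g n x|) * (φ₀ : Lp ℝ 1 ν) x) (g n x), key n x h1 h2])
    (by
      filter_upwards [hνμ.ae_le hc, hwc] with x hx hx'
      simpa using hx'.add hx)
  have E2 := eventually_mem_of_tendsto_ae hU hwm
    (fun n => by
      filter_upwards [hνμ.ae_le (hb n), hφb] with x h1 h2
      linarith [abs_nonneg (g n x), key n x h1 h2])
    hwc
  filter_upwards [E1, E2, eventually_ge_atTop N] with n h1 h2 hn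
  obtain ⟨φ, hφA, hφ⟩ := h1
  obtain ⟨φ', hφA', hφ'⟩ := h2
  have hint : ∀ χ : unitInterval ν, Integrable (fun x => f n x * (χ : Lp ℝ 1 ν) x) μ := fun χ =>
    (hf n).mul_bdd (c := 1) ((Lp.aestronglyMeasurable _).mono_ac hμν)
      (hμν.ae_le ((mem_unitInterval _).1 χ.2))
  have hsub : ∫ x, f n x * g n x ∂μ
      = ∫ x, f n x * (φ : Lp ℝ 1 ν) x ∂μ - ∫ x, f n x * (φ' : Lp ℝ 1 ν) x ∂μ := by
    rw [← integral_sub (hint φ) (hint φ')]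
    refine integral_congr_ae ?_
    filter_upwards [hμν.ae_le hφ, hμν.ae_le hφ'] with x hx hx'
    rw [hx, hx']
    ring
  rw [hsub]
  linarith [abs_sub (∫ x, f n x * (φ : Lp ℝ 1 ν) x ∂μ) (∫ x, f n x * (φ' : Lp ℝ 1 ν) x ∂μ),
    hφA n hn, hφA' n hn]

end WeakPairing

/-- If `Π ⊆ ℝ^m` is open, `z¹_n ⇀ z¹` weakly in `L¹(Π)`, `|z²_n| ≤ l` a.e.
uniformly in `n`, and `z²_n → z²` a.e. in `Π`, then `‖z¹_n (z²_n − z²)‖_{L¹(Π)} → 0`. -/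
theorem stmt8 (m : ℕ) (P : Set (Fin m → ℝ)) (hP : IsOpen P) (l : ℝ) (hl : 0 < l)
    (z1 : ℕ → (Fin m → ℝ) → ℝ) (z1lim : (Fin m → ℝ) → ℝ)
    (hz1int : ∀ n, IntegrableOn (z1 n) P) (hz1limint : IntegrableOn z1lim P)
    (hweak : ∀ g : (Fin m → ℝ) → ℝ, Measurable g → (∃ M : ℝ, ∀ x, |g x| ≤ M) →
      Tendsto (fun n => ∫ x in P, z1 n x * g x) atTop (nhds (∫ x in P, z1lim x * g x)))
    (z2 : ℕ → (Fin m → ℝ) → ℝ) (z2lim : (Fin m → ℝ) → ℝ)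
    (hz2meas : ∀ n, AEStronglyMeasurable (z2 n) (volume.restrict P))
    (hz2bd : ∀ n, ∀ᵐ x ∂volume.restrict P, |z2 n x| ≤ l)
    (hz2conv : ∀ᵐ x ∂volume.restrict P, Tendsto (fun n => z2 n x) atTop (nhds (z2lim x))) :
    Tendsto (fun n => ∫ x in P, |z1 n x * (z2 n x - z2lim x)|) atTop (nhds 0) := by
  have hm : AEStronglyMeasurable z2lim (volume.restrict P) :=
    aestronglyMeasurable_of_tendsto_ae atTop hz2meas hz2conv
  have hdm : ∀ n, AEStronglyMeasurable (fun x => z2 n x - z2lim x) (volume.restrict P) :=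
    fun n => (hz2meas n).sub hm
  have hdb : ∀ n, ∀ᵐ x ∂volume.restrict P, |z2 n x - z2lim x| ≤ 2 * l := fun n => by
    filter_upwards [ae_all_iff.2 hz2bd, hz2conv] with x h1 h2
    have h3 : |z2lim x| ≤ l := le_of_tendsto' h2.abs h1
    linarith [abs_sub (z2 n x) (z2lim x), h1 n]
  have hdc : ∀ᵐ x ∂volume.restrict P,
      Tendsto (fun n => z2 n x - z2lim x) atTop (nhds 0) := by
    filter_upwards [hz2conv] with x hx
    simpa using hx.sub_const (z2lim x)
  have hf : ∀ n, Integrable (fun x => z1 n x - z1lim x) (volume.restrict P) :=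
    fun n => (hz1int n).sub hz1limint
  have hsign : ∀ t : ℝ, |(SignType.sign t : ℝ)| ≤ 1 := fun t => by
    rcases lt_trichotomy t 0 with h | h | h <;> simp [h]
  have hT1 := WeakPairing.tendsto_integral_mul_zero (μ := volume.restrict P)
    (f := fun n x => z1 n x - z1lim x)
    (g := fun n x => (SignType.sign (z1 n x - z1lim x) : ℝ) * (|z2 n x - z2lim x| / (2 * l)))
    hf
    (fun φ hφm hφb => by
      have hi : ∀ u : (Fin m → ℝ) → ℝ, IntegrableOn u P →
          Integrable (fun x => u x * φ x) (volume.restrict P) := fun u hu =>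
        Integrable.mul_bdd (c := 1) hu hφm.aestronglyMeasurable (ae_of_all _ hφb)
      have h := (hweak φ hφm ⟨1, hφb⟩).sub_const (∫ x in P, z1lim x * φ x)
      rw [sub_self] at h
      refine h.congr fun n => ?_
      rw [← integral_sub (hi _ (hz1int n)) (hi _ hz1limint)]
      simp only [sub_mul])
    (fun n => by
      have hs : Measurable (fun t : ℝ => (SignType.sign t : ℝ)) := by
        refine Monotone.measurable fun a b hab => ?_
        have hab' : SignType.sign a ≤ SignType.sign b := SignType.sign.monotone hab
        revert hab'
        generalize SignType.sign a = s
        generalize SignType.sign b = t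
        cases s <;> cases t <;> simp
      exact (hs.comp_aemeasurable (hf n).aemeasurable).aestronglyMeasurable.mul
        ((hdm n).norm.aemeasurable.div_const _).aestronglyMeasurable)
    (fun n => by
      filter_upwards [hdb n] with x hx
      rw [abs_mul, abs_of_nonneg (a := |z2 n x - z2lim x| / (2 * l)) (by positivity)]
      exact mul_le_one₀ (hsign _) (by positivity) ((div_le_one (by positivity)).2 hx))
    (by
      filter_upwards [hdc] with x hx
      refine squeeze_zero_norm (a := fun n => |z2 n x - z2lim x| / (2 * l)) (fun n => ?_) ?_
      · rw [Real.norm_eq_abs, abs_mul,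
          abs_of_nonneg (a := |z2 n x - z2lim x| / (2 * l)) (by positivity)]
        exact mul_le_of_le_one_left (by positivity) (hsign _)
      · simpa using hx.abs.div_const (2 * l))
  have hT2 : Tendsto (fun n => ∫ x in P, |z1lim x * (z2 n x - z2lim x)|) atTop (nhds 0) := by
    have := tendsto_integral_of_dominated_convergence (μ := volume.restrict P)
      (F := fun n x => |z1lim x * (z2 n x - z2lim x)|) (f := fun _ => 0)
      (fun x => |z1lim x| * (2 * l))
      (fun n => (hz1limint.aestronglyMeasurable.mul (hdm n)).norm)
      (hz1limint.abs.mul_const _) ?_ ?_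
    · simpa using this
    · intro n
      filter_upwards [hdb n] with x hx
      rw [Real.norm_eq_abs, abs_abs, abs_mul]
      gcongr
    · filter_upwards [hdc] with x hx
      simpa using (hx.const_mul (z1lim x)).abs
  have hT := (hT1.const_mul (2 * l)).add hT2
  rw [mul_zero, add_zero] at hT
  refine squeeze_zero (fun n => integral_nonneg fun x => abs_nonneg _) (fun n => ?_) hT
  have hmulint : ∀ u : (Fin m → ℝ) → ℝ, IntegrableOn u P →
      Integrable (fun x => |u x * (z2 n x - z2lim x)|) (volume.restrict P) := fun u hu =>
    (Integrable.mul_bdd (c := 2 * l) hu (hdm n) (hdb n)).abs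
  have hpair : 2 * l * ∫ x in P, (z1 n x - z1lim x) *
        ((SignType.sign (z1 n x - z1lim x) : ℝ) * (|z2 n x - z2lim x| / (2 * l)))
      = ∫ x in P, |(z1 n x - z1lim x) * (z2 n x - z2lim x)| := by
    rw [← integral_const_mul]
    refine integral_congr_ae (ae_of_all _ fun x => ?_)
    simp only
    rw [abs_mul, ← self_mul_sign (z1 n x - z1lim x)]
    field_simp
  rw [hpair, ← integral_add (hmulint _ (hf n)) (hmulint _ hz1limint)]
  refine integral_mono (hmulint _ (hz1int n))
    ((hmulint _ (hf n)).add (hmulint _ hz1limint)) fun x => ?_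
  have := abs_add_le ((z1 n x - z1lim x) * (z2 n x - z2lim x)) (z1lim x * (z2 n x - z2lim x))
  rwa [← add_mul, sub_add_cancel] at this
end
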